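/- arXiv:2102.13108 — 3 statements merged into one kernel-verified Lean document; each statement's English description precedes it below -/
import Mathlib

section
/- Let C > 0 and μ₀ > 0 be real constants. Let j : ℝ³ × ℝ → ℝ³ be a smooth time-dependent vector field for which there is a compact set K ⊆ ℝ³ with supp j(·,t) ⊆ K for every t. Define the retarded vector potential A(x,t) = (μ₀/4π) ∫_{ℝ³} j(y, t − |x−y|/C)/|x−y| dy. Then A is twice differentiable and satisfies the inhomogeneous wave equation Δ_x A(x,t) − (1/C²) ∂²A/∂t²(x,t) = −μ₀ j(x,t) for all (x,t) ∈ ℝ³ × ℝ. -/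
noncomputable section

open MeasureTheory Real

abbrev V3 := Fin 3 → ℝ

def dot3 (a b : V3) : ℝ := ∑ i, a i * b i

def norm3 (a : V3) : ℝ := Real.sqrt (dot3 a a)

def cross3 (a b : V3) : V3 :=
  ![a 1 * b 2 - a 2 * b 1, a 2 * b 0 - a 0 * b 2, a 0 * b 1 - a 1 * b 0]

/-- Spatial partial derivative in direction `i` of a time-dependent field. -/
def pdS {F : Type*} [NormedAddCommGroup F] [NormedSpace ℝ F]
    (i : Fin 3) (f : V3 × ℝ → F) (p : V3 × ℝ) : F :=
  fderiv ℝ (fun y => f (y, p.2)) p.1 (Pi.single i 1)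

/-- Partial time derivative of a time-dependent field. -/
def pdT {F : Type*} [NormedAddCommGroup F] [NormedSpace ℝ F]
    (f : V3 × ℝ → F) (p : V3 × ℝ) : F :=
  deriv (fun s => f (p.1, s)) p.2

/-- Spatial gradient. -/
def grad (f : V3 × ℝ → ℝ) (p : V3 × ℝ) : V3 := fun i => pdS i f p

/-- Spatial divergence. -/
def divg (A : V3 × ℝ → V3) (p : V3 × ℝ) : ℝ := ∑ i, pdS i (fun q => A q i) p

/-- Spatial curl. -/
def curl (A : V3 × ℝ → V3) (p : V3 × ℝ) : V3 :=
  ![pdS 1 (fun q => A q 2) p - pdS 2 (fun q => A q 1) p,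
    pdS 2 (fun q => A q 0) p - pdS 0 (fun q => A q 2) p,
    pdS 0 (fun q => A q 1) p - pdS 1 (fun q => A q 0) p]

/-- Spatial Laplacian (componentwise for vector-valued fields). -/
def lap {F : Type*} [NormedAddCommGroup F] [NormedSpace ℝ F]
    (f : V3 × ℝ → F) (p : V3 × ℝ) : F :=
  ∑ i, pdS i (pdS i f) p

/-- Spatial directional derivative `(a·∇)f`. -/
def dirS {F : Type*} [NormedAddCommGroup F] [NormedSpace ℝ F]
    (a : V3) (f : V3 × ℝ → F) (p : V3 × ℝ) : F :=
  fderiv ℝ (fun y => f (y, p.2)) p.1 a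


/-- The retarded vector potential `A(x,t) = (μ₀/4π) ∫ j(y, t − |x−y|/C)/|x−y| dy`. -/
def Aret (C μ₀ : ℝ) (j : V3 × ℝ → V3) (p : V3 × ℝ) : V3 :=
  (μ₀ / (4 * π)) • ∫ y : V3, (norm3 (p.1 - y))⁻¹ • j (y, p.2 - norm3 (p.1 - y) / C)

open Filter Topology Metric Set

def rho (ε : ℝ) (z : V3) : ℝ := Real.sqrt (dot3 z z + ε ^ 2)

lemma dot3_self (z : V3) : dot3 z z = z 0 ^ 2 + z 1 ^ 2 + z 2 ^ 2 := by
  simp [dot3, Fin.sum_univ_three]; ring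

lemma rho_zero (z : V3) : rho 0 z = norm3 z := by simp [rho, norm3]

lemma dot3_nonneg (z : V3) : 0 ≤ dot3 z z := by rw [dot3_self]; positivity

lemma rho_sq (ε : ℝ) (z : V3) : rho ε z ^ 2 = z 0 ^ 2 + z 1 ^ 2 + z 2 ^ 2 + ε ^ 2 := by
  rw [rho, Real.sq_sqrt (add_nonneg (dot3_nonneg z) (sq_nonneg _)), dot3_self]

lemma rho_nonneg (ε : ℝ) (z : V3) : 0 ≤ rho ε z := Real.sqrt_nonneg _

lemma rho_pos {ε : ℝ} (hε : 0 < ε) (z : V3) : 0 < rho ε z :=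
  Real.sqrt_pos.2 (add_pos_of_nonneg_of_pos (dot3_nonneg z) (by positivity))

lemma norm_le_rho (ε : ℝ) (z : V3) : ‖z‖ ≤ rho ε z := by
  refine (pi_norm_le_iff_of_nonneg (rho_nonneg _ _)).2 fun i => ?_
  refine abs_le_of_sq_le_sq ?_ (rho_nonneg _ _)
  rw [rho_sq]
  fin_cases i <;> simp <;> nlinarith [sq_nonneg (z 0), sq_nonneg (z 1), sq_nonneg (z 2), sq_nonneg ε]

lemma continuous_rho2 : Continuous (fun q : ℝ × V3 => rho q.1 q.2) := by
  unfold rho dot3; fun_prop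

lemma continuous_rho (ε : ℝ) : Continuous (rho ε) := by
  unfold rho dot3; fun_prop

lemma integrable_bd (R M : ℝ) :
    Integrable (fun z : V3 => (ball (0 : V3) R).indicator (fun z => M * ‖z‖⁻¹) z) := by
  rw [integrable_indicator_iff measurableSet_ball]
  refine Integrable.const_mul ?_ M
  have := (integrableOn_fun_norm_addHaar (E := V3) (μ := volume) (f := fun r : ℝ => r⁻¹) (r := R)).2
  apply this
  have h : IntegrableOn (fun y : ℝ => y) (Ioo 0 R) := by
    exact (continuous_id.integrableOn_Icc (a := 0) (b := R)).mono_set Ioo_subset_Icc_self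
  refine h.congr_fun (fun y hy => ?_) measurableSet_Ioo
  have : y ≠ 0 := hy.1.ne'
  simp; field_simp

/-- Smooth with spatial support in `K`. -/
structure Nice (K : Set V3) {E : Type} [NormedAddCommGroup E] [NormedSpace ℝ E]
    (v : V3 × ℝ → E) : Prop where
  smooth : ContDiff ℝ (⊤ : ℕ∞) v
  supp : ∀ q : V3 × ℝ, q.1 ∉ K → v q = 0

section
variable {K : Set V3} {E : Type} [NormedAddCommGroup E] [NormedSpace ℝ E]
  {v : V3 × ℝ → E}

lemma Nice.fderiv' (hK : IsCompact K) (hv : Nice K v) : Nice K (fderiv ℝ v) := by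
  refine ⟨hv.smooth.fderiv_right (by simp), fun q hq => ?_⟩
  have : v =ᶠ[𝓝 q] fun _ => 0 := by
    have : IsOpen ((Prod.fst : V3 × ℝ → V3) ⁻¹' Kᶜ) := hK.isClosed.isOpen_compl.preimage continuous_fst
    filter_upwards [this.mem_nhds hq] with y hy using hv.supp y hy
  rw [this.fderiv_eq]; simp

/-- The retarded argument. -/
def ra (C ε : ℝ) (p : V3 × ℝ) (z : V3) : V3 × ℝ := (p.1 - z, p.2 - rho ε z / C)

lemma continuous_ra (C : ℝ) : Continuous (fun q : (V3 × ℝ) × ℝ × V3 => ra C q.2.1 q.1 q.2.2) := by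
  have := continuous_rho2
  have h2 : Continuous (fun q : (V3 × ℝ) × ℝ × V3 => rho q.2.1 q.2.2) := this.comp continuous_snd
  unfold ra; fun_prop

lemma Nice.bound (hK : IsCompact K) (hv : Nice K v) (C : ℝ) (p₀ : V3 × ℝ) :
    ∃ R M : ℝ, 0 ≤ M ∧ ∀ p ∈ closedBall p₀ 1, ∀ ε ∈ Icc (0:ℝ) 1, ∀ z : V3,
      ‖v (ra C ε p z)‖ ≤ M ∧ (R ≤ ‖z‖ → v (ra C ε p z) = 0) := by
  obtain ⟨B, hB⟩ := hK.isBounded.exists_norm_le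
  set R := |B| + ‖p₀‖ + 2
  have h0 : ∀ p ∈ closedBall p₀ 1, ∀ ε ∈ Icc (0:ℝ) 1, ∀ z : V3, R ≤ ‖z‖ → v (ra C ε p z) = 0 := by
    intro p hp ε _ z hz
    apply hv.supp
    intro hmem
    have h1 := hB _ hmem
    have h2 : ‖p.1‖ ≤ ‖p₀‖ + 1 := by
      have := norm_fst_le p
      have h3 : ‖p - p₀‖ ≤ 1 := by simpa [dist_eq_norm] using hp
      have h4 : ‖p‖ ≤ ‖p₀‖ + ‖p - p₀‖ := by
        calc ‖p‖ = ‖p₀ + (p - p₀)‖ := by congr 1; abel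
          _ ≤ _ := norm_add_le _ _
      linarith
    have h3 : ‖z‖ ≤ ‖p.1‖ + ‖p.1 - z‖ := by
      calc ‖z‖ = ‖p.1 - (p.1 - z)‖ := by congr 1; abel
        _ ≤ _ := norm_sub_le _ _
    have h4 : ‖p.1 - z‖ ≤ B := h1
    have := le_abs_self B
    simp only [R] at hz
    linarith
  have hc : Continuous (fun q : (V3 × ℝ) × ℝ × V3 => v (ra C q.2.1 q.1 q.2.2)) :=
    hv.smooth.continuous.comp (continuous_ra C)
  have hcomp : IsCompact (closedBall p₀ 1 ×ˢ (Icc (0:ℝ) 1 ×ˢ closedBall (0:V3) R)) :=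
    (isCompact_closedBall _ _).prod (isCompact_Icc.prod (isCompact_closedBall _ _))
  obtain ⟨M, hM⟩ := hcomp.exists_bound_of_continuousOn hc.continuousOn
  refine ⟨R, |M|, abs_nonneg _, fun p hp ε hε z => ⟨?_, h0 p hp ε hε z⟩⟩
  rcases le_total R ‖z‖ with h | h
  · rw [h0 p hp ε hε z h]; simp
  · exact (hM (p, ε, z) ⟨hp, hε, by simpa using h⟩).trans (le_abs_self _)

lemma Nice.bound' (hK : IsCompact K) (hv : Nice K v) (C : ℝ) (p₀ : V3 × ℝ) :
    ∃ bd : V3 → ℝ, Integrable bd ∧ ∀ p ∈ closedBall p₀ 1, ∀ ε ∈ Icc (0:ℝ) 1, ∀ z : V3, z ≠ 0 →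
      ‖(rho ε z)⁻¹ • v (ra C ε p z)‖ ≤ bd z := by
  obtain ⟨R, M, hM, h⟩ := hv.bound hK C p₀
  refine ⟨_, integrable_bd R M, fun p hp ε hε z hz => ?_⟩
  by_cases hzR : ‖z‖ < R
  · rw [indicator_of_mem (by simpa using hzR), norm_smul, mul_comm, norm_inv, Real.norm_of_nonneg (rho_nonneg _ _)]
    exact mul_le_mul (h p hp ε hε z).1 (inv_anti₀ (norm_pos_iff.2 hz) (norm_le_rho ε z)) (inv_nonneg.2 (rho_nonneg _ _)) hM
  · rw [indicator_of_notMem (by simpa using hzR), (h p hp ε hε z).2 (not_lt.1 hzR)]; simp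

lemma ae_ne_zero : ∀ᵐ z : V3, z ≠ 0 := by
  simp [ae_iff]

lemma Nice.meas (hv : Nice K v) (C ε : ℝ) (p : V3 × ℝ) :
    AEStronglyMeasurable (fun z => (rho ε z)⁻¹ • v (ra C ε p z)) := by
  have h1 : Measurable (fun z => (rho ε z)⁻¹) := (continuous_rho ε).measurable.inv
  have h2 : Continuous (fun z => v (ra C ε p z)) :=
    hv.smooth.continuous.comp ((continuous_ra C).comp (by fun_prop : Continuous fun z : V3 => (p, ε, z)))
  exact h1.aestronglyMeasurable.smul h2.aestronglyMeasurable

lemma Nice.integrable (hK : IsCompact K) (hv : Nice K v) (C : ℝ) {ε : ℝ} (hε : ε ∈ Icc (0:ℝ) 1) (p : V3 × ℝ) :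
    Integrable (fun z => (rho ε z)⁻¹ • v (ra C ε p z)) := by
  obtain ⟨bd, hbd, h⟩ := hv.bound' hK C p
  refine hbd.mono' (hv.meas C ε p) ?_
  filter_upwards [ae_ne_zero] with z hz
  exact h p (by simp) ε hε z hz

/-- The retarded potential operator. -/
def Phi (C : ℝ) (v : V3 × ℝ → E) (p : V3 × ℝ) : E := ∫ z : V3, (rho 0 z)⁻¹ • v (ra C 0 p z)

lemma Nice.hasFDerivAt (hK : IsCompact K) (hv : Nice K v) (C : ℝ) (p : V3 × ℝ) :
    HasFDerivAt (Phi C v) (Phi C (fderiv ℝ v) p) p := by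
  have hv' := hv.fderiv' hK
  obtain ⟨bd, hbd, h⟩ := hv'.bound' hK C p
  have h01 : (0:ℝ) ∈ Icc (0:ℝ) 1 := by simp
  unfold Phi
  refine hasFDerivAt_integral_of_dominated_of_fderiv_le (bound := bd)
    (F' := fun q z => (rho 0 z)⁻¹ • fderiv ℝ v (ra C 0 q z)) (closedBall_mem_nhds p one_pos)
    (Eventually.of_forall fun q => hv.meas C 0 q) (hv.integrable hK C h01 p) (hv'.meas C 0 p) ?_ hbd ?_
  · filter_upwards [ae_ne_zero] with z hz q hq using h q hq 0 h01 z hz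
  · refine Eventually.of_forall fun z q _ => HasFDerivAt.const_smul ?_ _
    have h1 : HasFDerivAt v (fderiv ℝ v (ra C 0 q z)) (q - (z, rho 0 z / C)) :=
      (hv.smooth.differentiable (by simp) _).hasFDerivAt
    have h2 : HasFDerivAt (fun q : V3 × ℝ => q - (z, rho 0 z / C)) (ContinuousLinearMap.id ℝ _) q :=
      (hasFDerivAt_id q).sub_const _
    exact h1.comp q h2

lemma Nice.continuous (hK : IsCompact K) (hv : Nice K v) (C : ℝ) : Continuous (Phi C v) :=
  continuous_iff_continuousAt.2 fun p => (hv.hasFDerivAt hK C p).continuousAt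

end

lemma Nice.contDiff {K : Set V3} (hK : IsCompact K) (C : ℝ) (n : ℕ) :
    ∀ {E : Type} [NormedAddCommGroup E] [NormedSpace ℝ E] {v : V3 × ℝ → E}, Nice K v →
      ContDiff ℝ n (Phi C v) := by
  induction n with
  | zero => intro E _ _ v hv; exact contDiff_zero.2 (hv.continuous hK C)
  | succ n ih =>
    intro E _ _ v hv
    have : ((n + 1 : ℕ) : WithTop ℕ∞) = n + 1 := by push_cast; rfl
    rw [this, contDiff_succ_iff_fderiv]
    refine ⟨fun p => (hv.hasFDerivAt hK C p).differentiableAt, by simp, ?_⟩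
    have h : fderiv ℝ (Phi C v) = Phi C (fderiv ℝ v) :=
      funext fun p => (hv.hasFDerivAt hK C p).fderiv
    rw [h]; exact ih (hv.fderiv' hK)

lemma integrable_tau4 : Integrable (fun w : V3 => (rho 1 w)⁻¹ ^ 4) := by
  have h := integrable_rpow_neg_one_add_norm_sq (E := V3) (μ := volume) (r := 4) (by simp; norm_num)
  refine h.mono' ((continuous_rho 1).measurable.inv.pow_const 4).aestronglyMeasurable
    (Eventually.of_forall fun w => ?_)
  have h1 : 1 + ‖w‖ ^ 2 ≤ rho 1 w ^ 2 := by
    have := pow_le_pow_left₀ (norm_nonneg _) (norm_le_rho 0 w) 2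
    rw [rho_sq] at this ⊢; linarith
  rw [Real.norm_of_nonneg (by have := rho_nonneg 1 w; positivity)]
  have h2 : (1 + ‖w‖ ^ 2) ^ (-4 / 2 : ℝ) = ((1 + ‖w‖ ^ 2)⁻¹) ^ 2 := by
    rw [show (-4 / 2 : ℝ) = -((2:ℕ):ℝ) by norm_num, Real.rpow_neg (by positivity), Real.rpow_natCast, inv_pow]
  rw [h2, show (rho 1 w)⁻¹ ^ 4 = ((rho 1 w ^ 2)⁻¹) ^ 2 by rw [← inv_pow]; ring]
  gcongr

lemma one_le_rho (w : V3) : 1 ≤ rho 1 w := by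
  have := rho_sq 1 w
  nlinarith [rho_nonneg 1 w, sq_nonneg (w 0), sq_nonneg (w 1), sq_nonneg (w 2)]

lemma integral_radial : ∫ y in Ioi (0:ℝ), y ^ 2 * (√(y ^ 2 + 1))⁻¹ ^ 5 = 1 / 3 := by
  have hpos : ∀ y : ℝ, 0 < √(y ^ 2 + 1) := fun y => Real.sqrt_pos.2 (by positivity)
  have hd : ∀ y : ℝ, HasDerivAt (fun y : ℝ => (1/3) * (y * (√(y ^ 2 + 1))⁻¹) ^ 3)
      (y ^ 2 * (√(y ^ 2 + 1))⁻¹ ^ 5) y := by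
    intro y
    have h1 : HasDerivAt (fun y : ℝ => y ^ 2 + 1) (2 * y) y := by
      simpa using (hasDerivAt_pow 2 y).add_const 1
    have h2 := h1.sqrt (by positivity)
    have h3 := (((hasDerivAt_id y).mul (h2.inv (hpos y).ne')).pow 3).const_mul (1/3)
    refine h3.congr_deriv ?_
    have hs := Real.sq_sqrt (show 0 ≤ y ^ 2 + 1 by positivity)
    have := hpos y
    simp only [id, Pi.mul_apply, Pi.inv_apply]
    set r := √(y ^ 2 + 1)
    norm_num
    field_simp
    linear_combination y ^ 2 * hs
  have hlim : Tendsto (fun y : ℝ => (1/3) * (y * (√(y ^ 2 + 1))⁻¹) ^ 3) atTop (𝓝 (1/3)) := by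
    have h1 : Tendsto (fun y : ℝ => (√(1 + y⁻¹ ^ 2))⁻¹) atTop (𝓝 ((√(1 + 0 ^ 2))⁻¹)) := by
      refine ((Real.continuous_sqrt.tendsto _).comp ((tendsto_inv_atTop_zero.pow 2).const_add 1)).inv₀ (by simp)
    have h2 : Tendsto (fun y : ℝ => y * (√(y ^ 2 + 1))⁻¹) atTop (𝓝 1) := by
      have : (√(1 + 0 ^ 2 : ℝ))⁻¹ = 1 := by simp
      rw [this] at h1
      refine h1.congr' ?_
      filter_upwards [eventually_gt_atTop 0] with y hy
      have : y ^ 2 + 1 = y ^ 2 * (1 + y⁻¹ ^ 2) := by field_simp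
      rw [this, Real.sqrt_mul (by positivity), Real.sqrt_sq hy.le]
      field_simp
    have h3 := (h2.pow 3).const_mul (1/3 : ℝ)
    rwa [one_pow, mul_one] at h3
  have := integral_Ioi_of_hasDerivAt_of_nonneg' (a := 0) (fun y _ => hd y)
    (fun y _ => by have := hpos y; positivity) hlim
  rw [this]; simp

lemma integral_tau5 : ∫ w : V3, (rho 1 w)⁻¹ ^ 5 = 4 * π / 3 := by
  have h1 : ∀ w : V3, (rho 1 w)⁻¹ ^ 5 = (fun r : ℝ => (√(r ^ 2 + 1))⁻¹ ^ 5) ‖WithLp.toLp 2 w‖ := by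
    intro w
    simp only [rho, EuclideanSpace.norm_eq, dot3_self]
    rw [Real.sq_sqrt (by positivity)]
    simp [Fin.sum_univ_three]
  simp_rw [h1]
  rw [(PiLp.volume_preserving_toLp (Fin 3)).integral_comp (MeasurableEquiv.toLp 2 _).measurableEmbedding
    (fun x : EuclideanSpace ℝ (Fin 3) => (√(‖x‖ ^ 2 + 1))⁻¹ ^ 5)]
  rw [integral_fun_norm_addHaar (volume : Measure (EuclideanSpace ℝ (Fin 3))) (fun r : ℝ => (√(r ^ 2 + 1))⁻¹ ^ 5)]
  simp only [finrank_euclideanSpace, Fintype.card_fin, smul_eq_mul, Nat.add_one_sub_one, Measure.real,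
    EuclideanSpace.volume_ball_fin_three]
  rw [integral_radial]
  simp [ENNReal.toReal_ofReal (show 0 ≤ π * 4 / 3 by positivity)]
  ring

/-- Directional derivative. -/
def Dd {E : Type} [NormedAddCommGroup E] [NormedSpace ℝ E] (a : V3 × ℝ) (v : V3 × ℝ → E) (q : V3 × ℝ) : E :=
  fderiv ℝ v q a

def ei (i : Fin 3) : V3 := Pi.single i 1
def es (i : Fin 3) : V3 × ℝ := (ei i, 0)
def et : V3 × ℝ := (0, 1)

section
variable {K : Set V3} {E : Type} [NormedAddCommGroup E] [NormedSpace ℝ E]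
  {v : V3 × ℝ → E}

lemma Nice.Dd (hK : IsCompact K) (hv : Nice K v) (a : V3 × ℝ) : Nice K (Dd a v) := by
  have h := hv.fderiv' hK
  refine ⟨h.smooth.clm_apply contDiff_const, fun q hq => ?_⟩
  unfold _root_.Dd
  rw [h.supp q hq]; simp

lemma Nice.Dd_comm (hv : Nice K v) (a b : V3 × ℝ) : _root_.Dd a (_root_.Dd b v) = _root_.Dd b (_root_.Dd a v) := by
  have hd : Differentiable ℝ (fderiv ℝ v) :=
    (hv.smooth.fderiv_right (m := ((⊤ : ℕ∞) : WithTop ℕ∞)) (by simp)).differentiable (by simp)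
  have h : ∀ a b q, _root_.Dd a (_root_.Dd b v) q = fderiv ℝ (fderiv ℝ v) q a b := by
    intro a b q
    unfold _root_.Dd
    rw [fderiv_clm_apply (hd q) (by fun_prop)]
    simp
  funext q
  rw [h, h]
  exact second_derivative_symmetric (f := v) (fun y => (hv.smooth.differentiable (by simp) y).hasFDerivAt)
    (hd q).hasFDerivAt a b

lemma Nice.add {w : V3 × ℝ → E} (hv : Nice K v) (hw : Nice K w) : Nice K (fun q => v q + w q) :=
  ⟨hv.smooth.add hw.smooth, fun q hq => by simp [hv.supp q hq, hw.supp q hq]⟩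

lemma Nice.smul (c : ℝ) (hv : Nice K v) : Nice K (fun q => c • v q) :=
  ⟨hv.smooth.const_smul c, fun q hq => by simp [hv.supp q hq]⟩

/-- minus D'Alembertian-like operator -/
def Box (C : ℝ) (v : V3 × ℝ → E) (q : V3 × ℝ) : E :=
  Dd (es 0) (Dd (es 0) v) q + Dd (es 1) (Dd (es 1) v) q + Dd (es 2) (Dd (es 2) v) q
    + (-(C⁻¹ ^ 2)) • Dd et (Dd et v) q

lemma Nice.Box (hK : IsCompact K) (C : ℝ) (hv : Nice K v) : Nice K (Box C v) :=
  (((((hv.Dd hK _).Dd hK _).add ((hv.Dd hK _).Dd hK _)).add ((hv.Dd hK _).Dd hK _)).add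
    (((hv.Dd hK _).Dd hK _).smul _))
end

lemma hasDerivAt_rho {ε : ℝ} (hε : 0 < ε) (z : V3) (i : Fin 3) :
    HasDerivAt (fun s : ℝ => rho ε (z + s • ei i)) (z i * (rho ε z)⁻¹) 0 := by
  have h : ∀ s : ℝ, dot3 (z + s • ei i) (z + s • ei i) + ε ^ 2 = dot3 z z + ε ^ 2 + (2 * z i) * s + s ^ 2 := by
    intro s
    rw [dot3_self, dot3_self]
    fin_cases i <;> simp [ei] <;> ring
  unfold rho
  simp_rw [h]
  have h1 : HasDerivAt (fun s : ℝ => dot3 z z + ε ^ 2 + (2 * z i) * s + s ^ 2) (2 * z i) 0 := by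
    have := (((hasDerivAt_id (0:ℝ)).const_mul (2 * z i)).const_add (dot3 z z + ε ^ 2)).add (hasDerivAt_pow 2 (0:ℝ))
    refine this.congr_deriv ?_
    simp
  have hp : 0 < dot3 z z + ε ^ 2 := add_pos_of_nonneg_of_pos (dot3_nonneg z) (by positivity)
  have h2 := h1.sqrt (by simpa using hp.ne')
  refine h2.congr_deriv ?_
  simp
  field_simp

section
variable {K : Set V3} {v : V3 × ℝ → ℝ}

lemma hasDerivAt_ra {ε : ℝ} (hε : 0 < ε) (hv : Nice K v) (C : ℝ) (p : V3 × ℝ) (z : V3) (i : Fin 3) :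
    HasDerivAt (fun s : ℝ => v (ra C ε p (z + s • ei i)))
      (-(Dd (es i) v (ra C ε p z)) - (z i * (rho ε z)⁻¹ * C⁻¹) * Dd et v (ra C ε p z)) 0 := by
  have h1 : HasFDerivAt v (fderiv ℝ v (ra C ε p z)) (ra C ε p (z + (0:ℝ) • ei i)) := by
    simpa using (hv.smooth.differentiable (by simp) (ra C ε p z)).hasFDerivAt
  have h2 : HasDerivAt (fun s : ℝ => ra C ε p (z + s • ei i)) (-ei i, -(z i * (rho ε z)⁻¹ / C)) 0 := by
    unfold ra
    refine HasDerivAt.prodMk ?_ ?_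
    · have := (((hasDerivAt_id (0:ℝ)).smul_const (ei i)).const_add z).const_sub p.1
      simpa using this
    · exact ((hasDerivAt_rho hε z i).div_const C).const_sub p.2
  have h3 := h1.comp_hasDerivAt (0:ℝ) h2
  refine h3.congr_deriv ?_
  have : ((-ei i, -(z i * (rho ε z)⁻¹ / C)) : V3 × ℝ) = -(es i) - (z i * (rho ε z)⁻¹ * C⁻¹) • et := by
    simp [es, et, div_eq_mul_inv]
  rw [this, map_sub, map_neg, map_smul]
  simp [Dd]

lemma cont_ra (hv : Nice K v) (C ε : ℝ) (p : V3 × ℝ) : Continuous (fun z => v (ra C ε p z)) :=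
  hv.smooth.continuous.comp ((continuous_ra C).comp (by fun_prop : Continuous fun z : V3 => (p, ε, z)))

lemma integrable_mul_ra (hK : IsCompact K) (hv : Nice K v) (C ε : ℝ) (p : V3 × ℝ) {k : V3 → ℝ} (hk : Continuous k) :
    Integrable (fun z => k z * v (ra C ε p z)) := by
  refine (hk.mul (cont_ra hv C ε p)).integrable_of_hasCompactSupport ?_
  refine HasCompactSupport.intro (K := (fun y => p.1 - y) '' K) (hK.image (by fun_prop)) fun z hz => ?_
  change k z * v (ra C ε p z) = 0
  rw [hv.supp, mul_zero]
  intro hm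
  exact hz ⟨_, hm, by simp [ra]⟩

/-- The vector field whose divergence we integrate. -/
def Fi (C ε : ℝ) (p : V3 × ℝ) (v : V3 × ℝ → ℝ) (i : Fin 3) (z : V3) : ℝ :=
  -(rho ε z)⁻¹ * Dd (es i) v (ra C ε p z) + (z i * (rho ε z)⁻¹ ^ 3) * v (ra C ε p z)
    + (C⁻¹ * z i * (rho ε z)⁻¹ ^ 2) * Dd et v (ra C ε p z)

def fi' (C ε : ℝ) (p : V3 × ℝ) (v : V3 × ℝ → ℝ) (i : Fin 3) (z : V3) : ℝ :=
  (rho ε z)⁻¹ * Dd (es i) (Dd (es i) v) (ra C ε p z)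
    + ((rho ε z)⁻¹ ^ 3 - 3 * z i ^ 2 * (rho ε z)⁻¹ ^ 5) * v (ra C ε p z)
    + (C⁻¹ * ((rho ε z)⁻¹ ^ 2 - 3 * z i ^ 2 * (rho ε z)⁻¹ ^ 4)) * Dd et v (ra C ε p z)
    + (-(C⁻¹ ^ 2 * z i ^ 2 * (rho ε z)⁻¹ ^ 3)) * Dd et (Dd et v) (ra C ε p z)

lemma Fi_lineDeriv (hK : IsCompact K) {ε : ℝ} (hε : 0 < ε) (hv : Nice K v) (C : ℝ) (p : V3 × ℝ) (z : V3) (i : Fin 3) :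
    HasLineDerivAt ℝ (Fi C ε p v i) (fi' C ε p v i z) z (ei i) := by
  have hρ := rho_pos hε z
  have hr := (hasDerivAt_rho hε z i).inv (by simpa using hρ.ne')
  have ha := hasDerivAt_ra hε (hv.Dd hK (es i)) C p z i
  have hb := hasDerivAt_ra hε hv C p z i
  have hc := hasDerivAt_ra hε (hv.Dd hK et) C p z i
  have hz : HasDerivAt (fun s : ℝ => (z + s • ei i) i) 1 0 := by
    simpa [ei] using (hasDerivAt_id (0:ℝ)).const_add (z i)
  have h := ((hr.neg.mul ha).add ((hz.mul (hr.pow 3)).mul hb)).add (((hz.const_mul C⁻¹).mul (hr.pow 2)).mul hc)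
  refine HasDerivAt.congr_deriv h ?_
  rw [hv.Dd_comm (es i) et]
  simp only [fi', Pi.neg_apply, Pi.inv_apply, Pi.mul_apply, Pi.pow_apply, zero_smul, add_zero]
  push_cast
  field_simp
  ring

lemma integrable_fi' (hK : IsCompact K) {ε : ℝ} (hε : 0 < ε) (hv : Nice K v) (C : ℝ) (p : V3 × ℝ) (i : Fin 3) :
    Integrable (fi' C ε p v i) := by
  have hr : Continuous (fun z => (rho ε z)⁻¹) := (continuous_rho ε).inv₀ fun z => (rho_pos hε z).ne'
  unfold fi'
  refine (((integrable_mul_ra hK ((hv.Dd hK _).Dd hK _) C ε p ?_).add (integrable_mul_ra hK hv C ε p ?_)).add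
    (integrable_mul_ra hK (hv.Dd hK _) C ε p ?_)).add (integrable_mul_ra hK ((hv.Dd hK _).Dd hK _) C ε p ?_) <;> fun_prop

lemma integrable_Fi (hK : IsCompact K) {ε : ℝ} (hε : 0 < ε) (hv : Nice K v) (C : ℝ) (p : V3 × ℝ) (i : Fin 3) :
    Integrable (Fi C ε p v i) := by
  have hr : Continuous (fun z => (rho ε z)⁻¹) := (continuous_rho ε).inv₀ fun z => (rho_pos hε z).ne'
  unfold Fi
  refine ((integrable_mul_ra hK (hv.Dd hK _) C ε p ?_).add (integrable_mul_ra hK hv C ε p ?_)).add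
    (integrable_mul_ra hK (hv.Dd hK _) C ε p ?_) <;> fun_prop

lemma integral_fi' (hK : IsCompact K) {ε : ℝ} (hε : 0 < ε) (hv : Nice K v) (C : ℝ) (p : V3 × ℝ) (i : Fin 3) :
    ∫ z, fi' C ε p v i z = 0 := by
  have h := integral_bilinear_hasLineDerivAt_right_eq_neg_left_of_integrable (μ := (volume : Measure V3))
    (f := fun _ : V3 => (1:ℝ)) (f' := fun _ => 0) (g := Fi C ε p v i) (g' := fi' C ε p v i) (v := ei i)
    (B := ContinuousLinearMap.mul ℝ ℝ) (by simp) (by simpa using integrable_fi' hK hε hv C p i)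
    (by simpa using integrable_Fi hK hε hv C p i)
    (fun x _ => by simpa [HasLineDerivAt] using hasDerivAt_const (0:ℝ) (1:ℝ)) (fun x _ => Fi_lineDeriv hK hε hv C p x i)
  simpa using h

lemma integral_reg (hK : IsCompact K) {ε : ℝ} (hε : 0 < ε) (hv : Nice K v) (C : ℝ) (p : V3 × ℝ) :
    ∫ z, ((rho ε z)⁻¹ * Box C v (ra C ε p z)
      + C⁻¹ ^ 2 * ((ε * (rho ε z)⁻¹) ^ 2 * ((rho ε z)⁻¹ * Dd et (Dd et v) (ra C ε p z)))) =
    - ∫ z, (3 * ε ^ 2 * (rho ε z)⁻¹ ^ 5 * v (ra C ε p z)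
      + 3 * ε ^ 2 * C⁻¹ * (rho ε z)⁻¹ ^ 4 * Dd et v (ra C ε p z)) := by
  have hr : Continuous (fun z => (rho ε z)⁻¹) := (continuous_rho ε).inv₀ fun z => (rho_pos hε z).ne'
  rw [eq_neg_iff_add_eq_zero, ← integral_add]
  · have : ∫ z, (fi' C ε p v 0 z + fi' C ε p v 1 z + fi' C ε p v 2 z) = 0 := by
      have h := integrable_fi' hK hε hv C p
      rw [integral_add (f := fun z => fi' C ε p v 0 z + fi' C ε p v 1 z) ((h 0).add (h 1)) (h 2), integral_add (h 0) (h 1)]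
      simp [integral_fi' hK hε hv]
    rw [← this]
    congr 1; funext z
    have hsq := rho_sq ε z
    have hρ := rho_pos hε z
    have h0 : z 0 ^ 2 = rho ε z ^ 2 - z 1 ^ 2 - z 2 ^ 2 - ε ^ 2 := by linarith
    simp only [fi', Box, h0, smul_eq_mul, inv_pow]
    have e1 : (rho ε z)^2 * (rho ε z ^ 3)⁻¹ = (rho ε z)⁻¹ := by field_simp
    field_simp
    ring
  · refine (integrable_mul_ra hK (hv.Box hK C) C ε p hr).add ?_
    refine (integrable_mul_ra hK ((hv.Dd hK et).Dd hK et) C ε p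
      (k := fun z => C⁻¹ ^ 2 * ((ε * (rho ε z)⁻¹) ^ 2 * (rho ε z)⁻¹)) (by fun_prop)).congr
      (Eventually.of_forall fun z => ?_)
    simp only; ring
  · exact (integrable_mul_ra hK hv C ε p (by fun_prop)).add (integrable_mul_ra hK (hv.Dd hK _) C ε p (by fun_prop))
end

section
variable {K : Set V3} {v : V3 × ℝ → ℝ}

lemma tendsto_ra (hv : Nice K v) (C : ℝ) (p : V3 × ℝ) (z : V3) :
    Tendsto (fun ε : ℝ => v (ra C ε p z)) (𝓝[>] 0) (𝓝 (v (ra C 0 p z))) := by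
  have : Continuous (fun ε : ℝ => v (ra C ε p z)) :=
    hv.smooth.continuous.comp ((continuous_ra C).comp (by fun_prop : Continuous fun ε : ℝ => (p, ε, z)))
  exact (this.tendsto 0).mono_left nhdsWithin_le_nhds

lemma tendsto_inv_rho {z : V3} (hz : z ≠ 0) :
    Tendsto (fun ε : ℝ => (rho ε z)⁻¹) (𝓝[>] 0) (𝓝 ((rho 0 z)⁻¹)) := by
  have h : Continuous (fun ε : ℝ => rho ε z) :=
    continuous_rho2.comp (by fun_prop : Continuous fun ε : ℝ => (ε, z))
  refine ((h.tendsto 0).inv₀ ?_).mono_left nhdsWithin_le_nhds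
  exact ((norm_pos_iff.2 hz).trans_le (norm_le_rho 0 z)).ne'

lemma ev_mem : ∀ᶠ ε : ℝ in 𝓝[>] 0, ε ∈ Ioc (0:ℝ) 1 := Ioc_mem_nhdsGT one_pos

lemma lim_left (hK : IsCompact K) (hv : Nice K v) (C : ℝ) (p : V3 × ℝ) :
    Tendsto (fun ε : ℝ => ∫ z, ((rho ε z)⁻¹ * Box C v (ra C ε p z)
      + C⁻¹ ^ 2 * ((ε * (rho ε z)⁻¹) ^ 2 * ((rho ε z)⁻¹ * Dd et (Dd et v) (ra C ε p z)))))
      (𝓝[>] 0) (𝓝 (Phi C (Box C v) p)) := by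
  have hB := hv.Box hK C
  have hT := (hv.Dd hK et).Dd hK et
  obtain ⟨b1, hb1, h1⟩ := hB.bound' hK C p
  obtain ⟨b2, hb2, h2⟩ := hT.bound' hK C p
  refine tendsto_integral_filter_of_dominated_convergence (fun z => b1 z + C⁻¹ ^ 2 * b2 z) ?_ ?_
    (hb1.add (hb2.const_mul _)) ?_
  · refine Eventually.of_forall fun ε => ?_
    have hm : Measurable (fun z => (ε * (rho ε z)⁻¹) ^ 2) :=
      (((continuous_rho ε).measurable.inv).const_mul ε).pow_const 2
    exact (hB.meas C ε p).add ((hm.aestronglyMeasurable.mul (hT.meas C ε p)).const_mul _)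
  · filter_upwards [ev_mem] with ε hε
    have hε' : ε ∈ Icc (0:ℝ) 1 := ⟨hε.1.le, hε.2⟩
    filter_upwards [ae_ne_zero] with z hz
    have k1 := h1 p (by simp) ε hε' z hz
    have k2 := h2 p (by simp) ε hε' z hz
    rw [smul_eq_mul] at k1 k2
    refine (norm_add_le _ _).trans (add_le_add k1 ?_)
    rw [norm_mul, norm_mul, Real.norm_of_nonneg (by positivity : 0 ≤ C⁻¹ ^ 2)]
    refine mul_le_mul_of_nonneg_left ?_ (by positivity)
    refine le_trans (mul_le_of_le_one_left (norm_nonneg _) ?_) k2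
    have hρ := rho_pos hε.1 z
    rw [Real.norm_of_nonneg (by positivity)]
    have : ε * (rho ε z)⁻¹ ≤ 1 := by
      rw [mul_inv_le_iff₀ hρ, one_mul]
      refine le_of_sq_le_sq ?_ hρ.le
      rw [rho_sq]; nlinarith [sq_nonneg (z 0), sq_nonneg (z 1), sq_nonneg (z 2)]
    exact pow_le_one₀ (mul_nonneg hε.1.le (inv_nonneg.2 hρ.le)) this
  · filter_upwards [ae_ne_zero] with z hz
    have hid : Tendsto (fun ε : ℝ => ε) (𝓝[>] 0) (𝓝 0) := tendsto_id.mono_left nhdsWithin_le_nhds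
    have hr := tendsto_inv_rho hz
    have := (hr.mul (tendsto_ra hB C p z)).add
      ((((hid.mul hr).pow 2).mul (hr.mul (tendsto_ra hT C p z))).const_mul (C⁻¹ ^ 2))
    simpa using this

lemma rho_scale {ε : ℝ} (hε : 0 < ε) (w : V3) : rho ε (ε • w) = ε * rho 1 w := by
  have h1 := rho_sq ε (ε • w)
  have h2 := rho_sq 1 w
  have h3 : (rho ε (ε • w)) ^ 2 = (ε * rho 1 w) ^ 2 := by
    rw [h1, mul_pow, h2]; simp; ring
  exact (pow_left_inj₀ (rho_nonneg _ _) (mul_nonneg hε.le (rho_nonneg _ _)) two_ne_zero).1 h3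

lemma scale_right {ε : ℝ} (hε : 0 < ε) (v : V3 × ℝ → ℝ) (C : ℝ) (p : V3 × ℝ) :
    ∫ z, (3 * ε ^ 2 * (rho ε z)⁻¹ ^ 5 * v (ra C ε p z)
      + 3 * ε ^ 2 * C⁻¹ * (rho ε z)⁻¹ ^ 4 * Dd et v (ra C ε p z)) =
    ∫ w, (3 * (rho 1 w)⁻¹ ^ 5 * v (ra C ε p (ε • w))
      + 3 * ε * C⁻¹ * (rho 1 w)⁻¹ ^ 4 * Dd et v (ra C ε p (ε • w))) := by
  have h := Measure.integral_comp_smul (volume : Measure V3)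
    (fun z => 3 * ε ^ 2 * (rho ε z)⁻¹ ^ 5 * v (ra C ε p z)
      + 3 * ε ^ 2 * C⁻¹ * (rho ε z)⁻¹ ^ 4 * Dd et v (ra C ε p z)) ε
  simp only [Module.finrank_fintype_fun_eq_card, Fintype.card_fin, smul_eq_mul] at h
  rw [abs_of_pos (by positivity)] at h
  have h' := congrArg (fun x => ε ^ 3 * x) h
  rw [mul_inv_cancel_left₀ (by positivity)] at h'
  rw [← h', ← integral_const_mul]
  congr 1; funext w
  have := rho_pos one_pos w
  rw [rho_scale hε]
  field_simp

lemma lim_right (hK : IsCompact K) (hv : Nice K v) (C : ℝ) (p : V3 × ℝ) :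
    Tendsto (fun ε : ℝ => ∫ w, (3 * (rho 1 w)⁻¹ ^ 5 * v (ra C ε p (ε • w))
      + 3 * ε * C⁻¹ * (rho 1 w)⁻¹ ^ 4 * Dd et v (ra C ε p (ε • w))))
      (𝓝[>] 0) (𝓝 (4 * π * v p)) := by
  have hT := hv.Dd hK et
  obtain ⟨_, M1, hM1, h1⟩ := hv.bound hK C p
  obtain ⟨_, M2, hM2, h2⟩ := hT.bound hK C p
  have hval : 4 * π * v p = ∫ w, 3 * (rho 1 w)⁻¹ ^ 5 * v p := by
    rw [integral_mul_const, integral_const_mul, integral_tau5]; ring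
  rw [hval]
  have hcr : Continuous (fun w => (rho 1 w)⁻¹) := (continuous_rho 1).inv₀ fun z => (rho_pos one_pos z).ne'
  have hc : ∀ u : V3 × ℝ → ℝ, Nice K u → Continuous fun q : ℝ × V3 => u (ra C q.1 p (q.1 • q.2)) := fun u hu =>
    hu.smooth.continuous.comp ((continuous_ra C).comp
      (by fun_prop : Continuous fun q : ℝ × V3 => (p, q.1, q.1 • q.2)))
  refine tendsto_integral_filter_of_dominated_convergence
    (fun w => (3 * M1 + 3 * |C⁻¹| * M2) * (rho 1 w)⁻¹ ^ 4) ?_ ?_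
    (integrable_tau4.const_mul _) ?_
  · refine Eventually.of_forall fun ε => Continuous.aestronglyMeasurable ?_
    have c1 : Continuous fun w : V3 => v (ra C ε p (ε • w)) :=
      (hc v hv).comp (by fun_prop : Continuous fun w : V3 => (ε, w))
    have c2 : Continuous fun w : V3 => Dd et v (ra C ε p (ε • w)) :=
      (hc _ hT).comp (by fun_prop : Continuous fun w : V3 => (ε, w))
    exact ((continuous_const.mul (hcr.pow 5)).mul c1).add ((continuous_const.mul (hcr.pow 4)).mul c2)
  · filter_upwards [ev_mem] with ε hε
    have hε' : ε ∈ Icc (0:ℝ) 1 := ⟨hε.1.le, hε.2⟩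
    refine Eventually.of_forall fun w => ?_
    have k1 := (h1 p (by simp) ε hε' (ε • w)).1
    have k2 := (h2 p (by simp) ε hε' (ε • w)).1
    have hρ := one_le_rho w
    have hτ0 : 0 ≤ (rho 1 w)⁻¹ := inv_nonneg.2 (rho_nonneg _ _)
    have hτ1 : (rho 1 w)⁻¹ ≤ 1 := inv_le_one_of_one_le₀ hρ
    set τ := (rho 1 w)⁻¹
    rw [add_mul]
    refine (norm_add_le _ _).trans (add_le_add ?_ ?_)
    · rw [norm_mul, Real.norm_of_nonneg (by positivity)]
      calc 3 * τ ^ 5 * ‖v (ra C ε p (ε • w))‖ ≤ 3 * τ ^ 4 * M1 := by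
            refine mul_le_mul ?_ k1 (norm_nonneg _) (by positivity)
            exact mul_le_mul_of_nonneg_left (pow_le_pow_of_le_one hτ0 hτ1 (by norm_num : 4 ≤ 5)) (by norm_num)
        _ = _ := by ring
    · rw [norm_mul, norm_mul, norm_mul, norm_mul, Real.norm_of_nonneg hε'.1, Real.norm_of_nonneg (by positivity : 0 ≤ τ ^ 4),
        Real.norm_of_nonneg (by norm_num : (0:ℝ) ≤ 3), Real.norm_eq_abs C⁻¹]
      calc 3 * ε * |C⁻¹| * τ ^ 4 * ‖Dd et v (ra C ε p (ε • w))‖ ≤ 3 * 1 * |C⁻¹| * τ ^ 4 * M2 := by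
            gcongr
            exact hε'.2
        _ = _ := by ring
  · refine Eventually.of_forall fun w => ?_
    have hid : Tendsto (fun ε : ℝ => ε) (𝓝[>] 0) (𝓝 0) := tendsto_id.mono_left nhdsWithin_le_nhds
    have c1 : Continuous fun ε : ℝ => v (ra C ε p (ε • w)) :=
      (hc v hv).comp (by fun_prop : Continuous fun ε : ℝ => (ε, w))
    have c2 : Continuous fun ε : ℝ => Dd et v (ra C ε p (ε • w)) :=
      (hc _ hT).comp (by fun_prop : Continuous fun ε : ℝ => (ε, w))
    have : Continuous fun ε : ℝ => 3 * (rho 1 w)⁻¹ ^ 5 * v (ra C ε p (ε • w))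
      + 3 * ε * C⁻¹ * (rho 1 w)⁻¹ ^ 4 * Dd et v (ra C ε p (ε • w)) :=
      (continuous_const.mul c1).add
        ((((continuous_const.mul continuous_id).mul continuous_const).mul continuous_const).mul c2)
    have h0 := (this.tendsto 0).mono_left (nhdsWithin_le_nhds (s := Ioi 0))
    have hra : ra C 0 p 0 = p := by simp [ra, rho, dot3]
    simpa [hra] using h0

lemma Phi_Box (hK : IsCompact K) (hv : Nice K v) (C : ℝ) (p : V3 × ℝ) :
    Phi C (Box C v) p = -(4 * π * v p) := by
  refine tendsto_nhds_unique (lim_left hK hv C p) ((lim_right hK hv C p).neg.congr' ?_)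
  filter_upwards [ev_mem] with ε hε
  rw [integral_reg hK hε.1 hv, scale_right hε.1]
end

section
variable {K : Set V3} {E : Type} [NormedAddCommGroup E] [NormedSpace ℝ E]
  {v : V3 × ℝ → E}

lemma zero_mem' : (0:ℝ) ∈ Icc (0:ℝ) 1 := by simp

lemma Dd_Phi (hK : IsCompact K) (hv : Nice K v) (C : ℝ) (a : V3 × ℝ) :
    Dd a (Phi C v) = Phi C (Dd a v) := by
  funext p
  rw [Dd, (hv.hasFDerivAt hK C p).fderiv, Phi,
    ContinuousLinearMap.integral_apply ((hv.fderiv' hK).integrable hK C zero_mem' p)]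
  rfl

lemma Phi_add {w : V3 × ℝ → E} (hK : IsCompact K) (hv : Nice K v) (hw : Nice K w) (C : ℝ) (p : V3 × ℝ) :
    Phi C (fun q => v q + w q) p = Phi C v p + Phi C w p := by
  unfold Phi
  simp_rw [smul_add]
  exact integral_add (hv.integrable hK C zero_mem' p) (hw.integrable hK C zero_mem' p)

lemma Phi_smul (c : ℝ) (C : ℝ) (p : V3 × ℝ) : Phi C (fun q => c • v q) p = c • Phi C v p := by
  unfold Phi
  rw [← integral_smul]
  congr 1; funext z; rw [smul_comm]

lemma Box_Phi (hK : IsCompact K) (hv : Nice K v) (C : ℝ) (p : V3 × ℝ) :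
    Box C (Phi C v) p = Phi C (Box C v) p := by
  have h := fun a => (hv.Dd hK a).Dd hK a
  unfold Box
  rw [Phi_add hK (((h _).add (h _)).add (h _)) ((h _).smul _), Phi_add hK ((h _).add (h _)) (h _),
    Phi_add hK (h _) (h _), Phi_smul]
  simp only [Dd_Phi hK hv, Dd_Phi hK (hv.Dd hK _)]

lemma pdS_eq {u : V3 × ℝ → E} (hu : Differentiable ℝ u) (i : Fin 3) : pdS i u = Dd (es i) u := by
  funext p
  have h1 : HasFDerivAt (fun y : V3 => (y, p.2)) (ContinuousLinearMap.inl ℝ V3 ℝ) p.1 := hasFDerivAt_prodMk_left _ _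
  have h2 := (hu (p.1, p.2)).hasFDerivAt.comp p.1 h1
  have h3 : fderiv ℝ (fun y => u (y, p.2)) p.1 = _ := h2.fderiv
  rw [pdS, h3]
  simp [Dd, es, ei]

lemma pdT_eq {u : V3 × ℝ → E} (hu : Differentiable ℝ u) : pdT u = Dd et u := by
  funext p
  have h1 : HasDerivAt (fun s : ℝ => (p.1, s)) ((0:V3), (1:ℝ)) p.2 :=
    (hasDerivAt_const _ _).prodMk (hasDerivAt_id _)
  have h2 := (hu (p.1, p.2)).hasFDerivAt.comp_hasDerivAt p.2 h1
  exact h2.deriv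
end

lemma Phi_Box_vec {K : Set V3} (hK : IsCompact K) {j : V3 × ℝ → V3} (hj : Nice K j) (C : ℝ) (p : V3 × ℝ) :
    Phi C (Box C j) p = -((4 * π) • j p) := by
  funext k
  have hk : Nice K (fun q => j q k) :=
    ⟨contDiff_pi.1 hj.smooth k, fun q hq => by simp [hj.supp q hq]⟩
  have h := Phi_Box hK hk C p
  have hD : ∀ (a : V3 × ℝ) (u : V3 × ℝ → V3), Nice K u → Dd a (fun q => u q k) = fun q => Dd a u q k := by
    intro a u hu
    funext q
    have := (ContinuousLinearMap.proj (R := ℝ) (φ := fun _ : Fin 3 => ℝ) k).hasFDerivAt.comp q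
      (hu.smooth.differentiable (by simp) q).hasFDerivAt
    unfold Dd
    have h3 : fderiv ℝ (fun q => u q k) q = _ := this.fderiv
    rw [h3]; rfl
  have hB : Box C (fun q => j q k) = fun q => Box C j q k := by
    funext q
    simp [Box, hD _ _ hj, hD _ _ (hj.Dd hK _)]
  have hP : Phi C (Box C j) p k = Phi C (fun q => Box C j q k) p := by
    unfold Phi
    exact ((ContinuousLinearMap.proj (R := ℝ) (φ := fun _ : Fin 3 => ℝ) k).integral_comp_comm
      ((hj.Box hK C).integrable hK C zero_mem' p)).symm
  rw [hP, ← hB, h]; simp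

lemma Aret_eq (C μ₀ : ℝ) (j : V3 × ℝ → V3) : Aret C μ₀ j = fun p => (μ₀ / (4 * π)) • Phi C j p := by
  funext p
  unfold Aret Phi
  congr 1
  rw [← integral_sub_left_eq_self _ volume p.1]
  simp [rho_zero, ra]

/-- The retarded vector potential is twice differentiable and satisfies the
inhomogeneous wave equation `ΔA − (1/C²) ∂²A/∂t² = −μ₀ j`. -/
theorem retarded_vector_potential_wave_equation
    (C μ₀ : ℝ) (hC : 0 < C) (hμ : 0 < μ₀)
    (j : V3 × ℝ → V3) (hj : ContDiff ℝ (⊤ : ℕ∞) j)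
    (K : Set V3) (hK : IsCompact K)
    (hsupp : ∀ t : ℝ, (Function.support fun y => j (y, t)) ⊆ K) :
    ContDiff ℝ (2 : ℕ∞) (Aret C μ₀ j) ∧
    ∀ p : V3 × ℝ,
      lap (Aret C μ₀ j) p - (1 / C ^ 2) • pdT (pdT (Aret C μ₀ j)) p = -(μ₀ • j p) := by
  have hN : Nice K j := ⟨hj, fun q hq => by
    by_contra h
    exact hq (hsupp q.2 h)⟩
  rw [Aret_eq]
  set c := μ₀ / (4 * π) with hc
  have hN' := hN.smul c
  have hA : (fun p => c • Phi C j p) = Phi C (fun q => c • j q) := funext fun p => (Phi_smul c C p).symm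
  rw [hA]
  have hdiff : ∀ {u : V3 × ℝ → V3}, Nice K u → Differentiable ℝ (Phi C u) := fun hu p =>
    (hu.hasFDerivAt hK C p).differentiableAt
  refine ⟨Nice.contDiff hK C 2 hN', fun p => ?_⟩
  have hB := Box_Phi hK hN' C p
  rw [Phi_Box_vec hK hN'] at hB
  have hS : ∀ i, pdS i (pdS i (Phi C fun q => c • j q)) = Dd (es i) (Dd (es i) (Phi C fun q => c • j q)) := by
    intro i
    rw [pdS_eq (hdiff hN'), pdS_eq]
    rw [Dd_Phi hK hN']; exact hdiff (hN'.Dd hK _)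
  have hT : pdT (pdT (Phi C fun q => c • j q)) = Dd et (Dd et (Phi C fun q => c • j q)) := by
    rw [pdT_eq (hdiff hN'), pdT_eq]
    rw [Dd_Phi hK hN']; exact hdiff (hN'.Dd hK _)
  have hcm : (4 * π) * c = μ₀ := by rw [hc]; field_simp
  rw [lap, Fin.sum_univ_three, hS, hS, hS, hT]
  rw [smul_smul, hcm] at hB
  rw [← hB, Box, neg_smul, ← sub_eq_add_neg]
  simp
end
end

section
/- Let C > 0, μ₀ > 0, ε₀ > 0 be real constants with C² = 1/(μ₀ε₀). Let ρ : ℝ³ × ℝ → ℝ and j : ℝ³ × ℝ → ℝ³ be smooth, with a compact set K ⊆ ℝ³ such that supp ρ(·,t) ⊆ K and supp j(·,t) ⊆ K for every t, and suppose the continuity equation ∂ρ/∂t(x,t) + (∇·j)(x,t) = 0 holds for all (x,t). Define the retarded potentials A(x,t) = (μ₀/4π) ∫_{ℝ³} j(y, t − |x−y|/C)/|x−y| dy and V(x,t) = (1/(4πε₀)) ∫_{ℝ³} ρ(y, t − |x−y|/C)/|x−y| dy. Then the Lorenz gauge condition holds: (∇·A)(x,t) + (1/C²) ∂V/∂t(x,t)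 = 0 for all (x,t) ∈ ℝ³ × ℝ. -/
noncomputable section

open MeasureTheory Real

/-- The retarded scalar potential. -/
def Vret (C ε₀ : ℝ) (ρ : V3 × ℝ → ℝ) (p : V3 × ℝ) : ℝ :=
  (1 / (4 * π * ε₀)) * ∫ y : V3, (norm3 (p.1 - y))⁻¹ * ρ (y, p.2 - norm3 (p.1 - y) / C)

theorem aux_norm3_cont : Continuous norm3 := by
  unfold norm3 dot3
  fun_prop

theorem aux_norm3_ge (z : V3) : ‖z‖ ≤ norm3 z := by
  refine (pi_norm_le_iff_of_nonneg (Real.sqrt_nonneg _)).2 fun i => ?_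
  rw [Real.norm_eq_abs]
  refine Real.abs_le_sqrt ?_
  unfold dot3
  have := Finset.single_le_sum (f := fun i => z i * z i)
    (fun i _ => mul_self_nonneg (z i)) (Finset.mem_univ i)
  simpa [sq] using this

theorem aux_w_locint : LocallyIntegrable (fun z : V3 => (norm3 z)⁻¹) := by
  refine locallyIntegrable_of_norm_le_rpow (C := 1) (α := 1) (by simp) (by simp) ?_ ?_
  · refine Filter.Eventually.of_forall fun z => ?_
    have h0 : 0 ≤ norm3 z := Real.sqrt_nonneg _
    rw [norm_inv, Real.norm_eq_abs, abs_of_nonneg h0, Real.rpow_neg_one, one_mul]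
    rcases eq_or_ne z 0 with rfl | hz
    · simp [norm3, dot3]
    · exact inv_anti₀ (norm_pos_iff.2 hz) (aux_norm3_ge z)
  · exact aux_norm3_cont.measurable.inv.aestronglyMeasurable

def auxS (C : ℝ) (z : V3) : V3 × ℝ := (z, norm3 z / C)

theorem auxS_cont (C : ℝ) : Continuous (auxS C) := by
  unfold auxS
  have := aux_norm3_cont
  fun_prop

theorem aux_bound {E : Type*} [NormedAddCommGroup E] [NormedSpace ℝ E] (C : ℝ)
    (g : V3 × ℝ → E) (hg : Continuous g) (K : Set V3) (hK : IsCompact K)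
    (hs : ∀ p : V3 × ℝ, p.1 ∉ K → g p = 0) (p₀ : V3 × ℝ) :
    ∃ b : V3 → ℝ, Integrable b ∧ ∀ z, ∀ p ∈ Metric.closedBall p₀ 1,
      ‖(norm3 z)⁻¹ • g (p - auxS C z)‖ ≤ b z := by
  obtain ⟨Q, hQc, hQ⟩ : ∃ Q : Set V3, IsCompact Q ∧
      ∀ z, ∀ p ∈ Metric.closedBall p₀ 1, p.1 - z ∈ K → z ∈ Q := by
    refine ⟨(fun q : (V3 × ℝ) × V3 => q.1.1 - q.2) '' (Metric.closedBall p₀ 1 ×ˢ K),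
      ((isCompact_closedBall p₀ 1).prod hK).image (by fun_prop), fun z p hp hz => ?_⟩
    exact ⟨(p, p.1 - z), ⟨hp, hz⟩, by simp⟩
  have hcont : Continuous (fun q : (V3 × ℝ) × V3 => g (q.1 - auxS C q.2)) := by
    have := auxS_cont C
    fun_prop
  obtain ⟨M, hM⟩ := (((isCompact_closedBall p₀ 1).prod hQc)).exists_bound_of_continuousOn
    hcont.continuousOn
  refine ⟨Q.indicator fun z => (norm3 z)⁻¹ * M, ?_, fun z p hp => ?_⟩
  · rw [integrable_indicator_iff hQc.measurableSet]
    exact (aux_w_locint.integrableOn_isCompact hQc).mul_const M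
  · have h0 : 0 ≤ norm3 z := Real.sqrt_nonneg _
    by_cases hz : z ∈ Q
    · rw [Set.indicator_of_mem hz, norm_smul, norm_inv, Real.norm_eq_abs, abs_of_nonneg h0]
      exact mul_le_mul_of_nonneg_left (hM (p, z) ⟨hp, hz⟩) (inv_nonneg.2 h0)
    · rw [Set.indicator_of_notMem hz, hs _ (fun h => hz (hQ z p hp h))]
      simp

theorem aux_meas {E : Type*} [NormedAddCommGroup E] [NormedSpace ℝ E] (C : ℝ)
    (g : V3 × ℝ → E) (hg : Continuous g) (p : V3 × ℝ) :
    AEStronglyMeasurable (fun z => (norm3 z)⁻¹ • g (p - auxS C z)) volume := by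
  refine AEStronglyMeasurable.smul (aux_norm3_cont.measurable.inv.aestronglyMeasurable) ?_
  have := auxS_cont C
  exact Continuous.aestronglyMeasurable (by fun_prop)

theorem aux_int {E : Type*} [NormedAddCommGroup E] [NormedSpace ℝ E] (C : ℝ)
    (g : V3 × ℝ → E) (hg : Continuous g) (K : Set V3) (hK : IsCompact K)
    (hs : ∀ p : V3 × ℝ, p.1 ∉ K → g p = 0) (p : V3 × ℝ) :
    Integrable (fun z => (norm3 z)⁻¹ • g (p - auxS C z)) := by
  obtain ⟨b, hb, h⟩ := aux_bound C g hg K hK hs p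
  exact hb.mono' (aux_meas C g hg p)
    (Filter.Eventually.of_forall fun z => h z p (Metric.mem_closedBall_self zero_le_one))

theorem aux_fderiv_supp (g : V3 × ℝ → ℝ) (K : Set V3) (hK : IsCompact K)
    (hs : ∀ p : V3 × ℝ, p.1 ∉ K → g p = 0) (p : V3 × ℝ) (hp : p.1 ∉ K) :
    fderiv ℝ g p = 0 := by
  have : g =ᶠ[nhds p] fun _ => 0 := by
    filter_upwards [(hK.isClosed.isOpen_compl.preimage continuous_fst).mem_nhds hp] with q hq
    exact hs q hq
  rw [this.fderiv_eq]
  simp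

theorem aux_deriv (C : ℝ) (g : V3 × ℝ → ℝ) (hg : ContDiff ℝ (⊤ : ℕ∞) g)
    (K : Set V3) (hK : IsCompact K)
    (hs : ∀ p : V3 × ℝ, p.1 ∉ K → g p = 0) (p : V3 × ℝ) :
    HasFDerivAt (fun p => ∫ z, (norm3 z)⁻¹ • g (p - auxS C z))
      (∫ z, (norm3 z)⁻¹ • fderiv ℝ g (p - auxS C z)) p := by
  have hd : Continuous (fderiv ℝ g) := hg.continuous_fderiv (by simp)
  obtain ⟨b, hb, h⟩ := aux_bound C (fderiv ℝ g) hd K hK (aux_fderiv_supp g K hK hs) p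
  refine hasFDerivAt_integral_of_dominated_of_fderiv_le (𝕜 := ℝ)
    (Metric.closedBall_mem_nhds p one_pos)
    (Filter.Eventually.of_forall fun q => aux_meas C g hg.continuous q)
    (aux_int C g hg.continuous K hK hs p) (aux_meas C _ hd p)
    (Filter.Eventually.of_forall h) hb
    (Filter.Eventually.of_forall fun z q _ => ?_)
  have h1 : HasFDerivAt g (fderiv ℝ g (q - auxS C z)) (q - auxS C z) :=
    (hg.differentiable (by simp) _).hasFDerivAt
  have h2 := h1.comp q ((hasFDerivAt_id q).sub_const (auxS C z))
  have h3 := h2.const_smul (norm3 z)⁻¹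
  rw [ContinuousLinearMap.comp_id] at h3
  exact h3

theorem aux_pdS (f : V3 × ℝ → ℝ) (p : V3 × ℝ) (L : V3 × ℝ →L[ℝ] ℝ) (h : HasFDerivAt f L p)
    (i : Fin 3) : pdS i f p = L (Pi.single i 1, 0) := by
  have h2 : HasFDerivAt (fun y => f (y, p.2)) _ p.1 := h.comp p.1 (hasFDerivAt_prodMk_left p.1 p.2)
  unfold pdS
  rw [h2.fderiv]
  simp

theorem aux_pdT (f : V3 × ℝ → ℝ) (p : V3 × ℝ) (L : V3 × ℝ →L[ℝ] ℝ) (h : HasFDerivAt f L p) :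
    pdT f p = L (0, 1) := by
  have h2 : HasFDerivAt (fun s => f (p.1, s)) _ p.2 := h.comp p.2 (hasFDerivAt_prodMk_right p.1 p.2)
  unfold pdT
  rw [h2.hasDerivAt.deriv]
  simp

theorem aux_shift {E : Type*} [NormedAddCommGroup E] [NormedSpace ℝ E] (C : ℝ)
    (g : V3 × ℝ → E) (p : V3 × ℝ) :
    ∫ y : V3, (norm3 (p.1 - y))⁻¹ • g (y, p.2 - norm3 (p.1 - y) / C)
      = ∫ z, (norm3 z)⁻¹ • g (p - auxS C z) := by
  rw [← integral_sub_left_eq_self (fun z => (norm3 z)⁻¹ • g (p - auxS C z)) volume p.1]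
  congr 1
  ext y
  congr 2
  ext <;> simp [auxS]

/-- The retarded potentials of sources satisfying the continuity equation
satisfy the Lorenz gauge condition `∇·A + (1/C²) ∂V/∂t = 0`. -/
theorem retarded_potentials_lorenz_gauge
    (C μ₀ ε₀ : ℝ) (hC : 0 < C) (hμ : 0 < μ₀) (hε : 0 < ε₀)
    (hCμε : C ^ 2 = 1 / (μ₀ * ε₀))
    (ρ : V3 × ℝ → ℝ) (j : V3 × ℝ → V3)
    (hρ : ContDiff ℝ (⊤ : ℕ∞) ρ) (hj : ContDiff ℝ (⊤ : ℕ∞) j)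
    (K : Set V3) (hK : IsCompact K)
    (hsuppρ : ∀ t : ℝ, (Function.support fun y => ρ (y, t)) ⊆ K)
    (hsuppj : ∀ t : ℝ, (Function.support fun y => j (y, t)) ⊆ K)
    (hcont : ∀ p : V3 × ℝ, pdT ρ p + divg j p = 0) :
    ∀ p : V3 × ℝ, divg (Aret C μ₀ j) p + (1 / C ^ 2) * pdT (Vret C ε₀ ρ) p = 0 := by
  intro p
  have hsρ : ∀ p : V3 × ℝ, p.1 ∉ K → ρ p = 0 := fun q hq => by
    by_contra h
    exact hq (hsuppρ q.2 h)
  have hsj : ∀ i, ∀ p : V3 × ℝ, p.1 ∉ K → j p i = 0 := fun i q hq => by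
    by_contra h
    exact hq (hsuppj q.2 (fun h' => h (by simpa using congrFun h' i)))
  have hji : ∀ i, ContDiff ℝ (⊤ : ℕ∞) (fun q => j q i) := fun i => contDiff_pi.1 hj i
  have hV : Vret C ε₀ ρ = fun p => (1 / (4 * π * ε₀)) • ∫ z, (norm3 z)⁻¹ • ρ (p - auxS C z) := by
    ext q
    rw [← aux_shift]
    rfl
  have hA : ∀ i, (fun q => Aret C μ₀ j q i)
      = fun p => (μ₀ / (4 * π)) • ∫ z, (norm3 z)⁻¹ • j (p - auxS C z) i := by
    intro i
    ext q
    unfold Aret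
    rw [aux_shift, Pi.smul_apply, eval_integral]
    · rfl
    · intro i
      exact aux_int C (fun q => j q i) (hji i).continuous K hK (hsj i) q
  have hdV := (aux_deriv C ρ hρ K hK hsρ p).const_smul (1 / (4 * π * ε₀))
  have hdA := fun i => (aux_deriv C _ (hji i) K hK (hsj i) p).const_smul (μ₀ / (4 * π))
  have hIV := aux_int C _ (hρ.continuous_fderiv (by simp)) K hK (aux_fderiv_supp ρ K hK hsρ) p
  have hIA := fun i => aux_int C _ ((hji i).continuous_fderiv (by simp)) K hK
    (aux_fderiv_supp _ K hK (hsj i)) p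
  have e1 : pdT (Vret C ε₀ ρ) p = (1 / (4 * π * ε₀)) *
      ∫ z, (norm3 z)⁻¹ * fderiv ℝ ρ (p - auxS C z) (0, 1) := by
    rw [hV]
    refine (aux_pdT _ _ _ hdV).trans ?_
    rw [ ContinuousLinearMap.smul_apply,
      ContinuousLinearMap.integral_apply hIV]
    rfl
  have e2 : divg (Aret C μ₀ j) p = (μ₀ / (4 * π)) *
      ∫ z, ∑ i, (norm3 z)⁻¹ * fderiv ℝ (fun q => j q i) (p - auxS C z) (Pi.single i 1, 0) := by
    unfold divg
    rw [integral_finsetSum, Finset.mul_sum]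
    · refine Finset.sum_congr rfl fun i _ => ?_
      rw [hA]
      refine (aux_pdS _ _ _ (hdA i) i).trans ?_
      rw [ ContinuousLinearMap.smul_apply,
        ContinuousLinearMap.integral_apply (hIA i)]
      rfl
    · intro i _
      exact (hIA i).apply_continuousLinearMap _
  have e3 : ∀ q, ∑ i, fderiv ℝ (fun q => j q i) q (Pi.single i 1, 0) = - fderiv ℝ ρ q (0, 1) := by
    intro q
    have := hcont q
    unfold divg at this
    rw [aux_pdT _ _ _ (hρ.differentiable (by simp) q).hasFDerivAt] at this
    simp_rw [fun i => aux_pdS _ _ _ ((hji i).differentiable (by simp) q).hasFDerivAt i] at this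
    linarith
  simp_rw [← Finset.mul_sum, e3, mul_neg, integral_neg] at e2
  rw [e1, e2, hCμε]
  field_simp
  ring
end
end

section
/- (Maxwell's invariance theorem.) Let A : ℝ³ × ℝ → ℝ³ and ψ : ℝ³ × ℝ → ℝ be smooth, and let x̄ : ℝ → ℝ³ be differentiable with derivative x̄'. Define A'(x',t) = A(x' + x̄(t), t) and ψ'(x',t) = ψ(x' + x̄(t), t) − x̄'(t)·A'(x',t). For v ∈ ℝ³ define the electromotive intensity ℰ[A,ψ](x,v,t) = v × (∇×A)(x,t) − ∂A/∂t(x,t) − ∇ψ(x,t). Then for every t ∈ ℝ, every x' ∈ ℝ³ and every v' ∈ ℝ³, setting x = x' + x̄(t) and v = v' + x̄'(t), one has ℰ[A',ψ'](x',v',t) = ℰ[A,ψ](x,v,t). -/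
noncomputable section

open MeasureTheory Real

/-- The electromotive intensity `ℰ[A,ψ](x,v,t) = v × (∇×A) − ∂A/∂t − ∇ψ`. -/
def emf (A : V3 × ℝ → V3) (ψ : V3 × ℝ → ℝ) (x v : V3) (t : ℝ) : V3 :=
  cross3 v (curl A (x, t)) - pdT A (x, t) - grad ψ (x, t)

theorem mx_hasS {F : Type*} [NormedAddCommGroup F] [NormedSpace ℝ F]
    (f : V3 × ℝ → F) (hf : Differentiable ℝ f) (c x : V3) (t : ℝ) :
    HasFDerivAt (fun y : V3 => f (y + c, t))
      ((fderiv ℝ f (x + c, t)).comp (ContinuousLinearMap.inl ℝ V3 ℝ)) x := by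
  have h1 : HasFDerivAt (fun y : V3 => (y + c, t)) (ContinuousLinearMap.inl ℝ V3 ℝ) x :=
    ((hasFDerivAt_id x).add_const c).prodMk (hasFDerivAt_const t x)
  exact HasFDerivAt.comp x (hf (x + c, t)).hasFDerivAt h1

theorem mx_hasS0 {F : Type*} [NormedAddCommGroup F] [NormedSpace ℝ F]
    (f : V3 × ℝ → F) (hf : Differentiable ℝ f) (x : V3) (t : ℝ) :
    HasFDerivAt (fun y : V3 => f (y, t))
      ((fderiv ℝ f (x, t)).comp (ContinuousLinearMap.inl ℝ V3 ℝ)) x := by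
  simpa using mx_hasS f hf 0 x t

theorem mx_hasT {F : Type*} [NormedAddCommGroup F] [NormedSpace ℝ F]
    (f : V3 × ℝ → F) (hf : Differentiable ℝ f) (xb : ℝ → V3) (w x : V3) (t : ℝ)
    (h : HasDerivAt xb w t) :
    HasDerivAt (fun s : ℝ => f (x + xb s, s)) (fderiv ℝ f (x + xb t, t) (w, 1)) t := by
  have h1 : HasDerivAt (fun s : ℝ => (x + xb s, s)) (w, (1 : ℝ)) t :=
    (h.const_add x).prodMk (hasDerivAt_id t)
  exact HasFDerivAt.comp_hasDerivAt t (hf (x + xb t, t)).hasFDerivAt h1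

/-- **Maxwell's invariance theorem**: the electromotive intensity is invariant
under the time-dependent translation `x = x' + x̄(t)`, `v = v' + x̄'(t)`, with
`A'(x',t) = A(x'+x̄(t),t)` and `ψ'(x',t) = ψ(x'+x̄(t),t) − x̄'(t)·A'(x',t)`. -/
theorem maxwell_invariance
    (A : V3 × ℝ → V3) (ψ : V3 × ℝ → ℝ)
    (hA : ContDiff ℝ (⊤ : ℕ∞) A) (hψ : ContDiff ℝ (⊤ : ℕ∞) ψ)
    (xb xb' : ℝ → V3) (hxb : ∀ t : ℝ, HasDerivAt xb (xb' t) t)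
    (A' : V3 × ℝ → V3) (hA' : A' = fun p => A (p.1 + xb p.2, p.2))
    (ψ' : V3 × ℝ → ℝ) (hψ' : ψ' = fun p => ψ (p.1 + xb p.2, p.2) - dot3 (xb' p.2) (A' p)) :
    ∀ (t : ℝ) (x' v' : V3),
      emf A' ψ' x' v' t = emf A ψ (x' + xb t) (v' + xb' t) t := by
  intro t x' v'
  have dA : Differentiable ℝ A := hA.differentiable (by simp)
  have dψ : Differentiable ℝ ψ := hψ.differentiable (by simp)
  set L := fderiv ℝ A (x' + xb t, t) with hL
  set M := fderiv ℝ ψ (x' + xb t, t) with hM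
  have sA : ∀ i j, pdS i (fun q => A q j) (x' + xb t, t) = L (Pi.single i 1, 0) j := by
    intro i j
    have := (hasFDerivAt_pi'.1 (mx_hasS0 A dA (x' + xb t) t)) j
    simp only [pdS]
    rw [this.fderiv]
    simp [hL]
  have sA' : ∀ i j, pdS i (fun q => A' q j) (x', t) = L (Pi.single i 1, 0) j := by
    intro i j
    have := (hasFDerivAt_pi'.1 (mx_hasS A dA (xb t) x' t)) j
    simp only [pdS, hA']
    rw [this.fderiv]
    simp [hL]
  have tA : pdT A (x' + xb t, t) = L (0, 1) := by
    have := (mx_hasT A dA (fun _ => xb t) 0 x' t (hasDerivAt_const t _)).deriv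
    simpa only [pdT] using this
  have tA' : pdT A' (x', t) = L (xb' t, 1) := by
    have := (mx_hasT A dA xb (xb' t) x' t (hxb t)).deriv
    simpa only [pdT, hA'] using this
  have gψ : ∀ i, grad ψ (x' + xb t, t) i = M (Pi.single i 1, 0) := by
    intro i
    simp only [grad, pdS]
    rw [(mx_hasS0 ψ dψ (x' + xb t) t).fderiv]
    simp [hM]
  have gψ' : ∀ i, grad ψ' (x', t) i = M (Pi.single i 1, 0)
      - ∑ j, xb' t j * L (Pi.single i 1, 0) j := by
    intro i
    have h2 := (mx_hasS ψ dψ (xb t) x' t).sub (HasFDerivAt.fun_sum (u := Finset.univ)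
      (fun j _ => ((hasFDerivAt_pi'.1 (mx_hasS A dA (xb t) x' t)) j).const_mul (xb' t j)))
    have h3 : (fun y : V3 => ψ' (y, t)) = (fun y => ψ (y + xb t, t)) -
        fun y => ∑ i, xb' t i * A (y + xb t, t) i := by
      rw [hψ', hA']
      rfl
    simp only [grad, pdS]
    rw [h3, h2.fderiv]
    simp [hM, hL]
  have lin : L (xb' t, 1) = L (0, 1) + ∑ i, xb' t i • L (Pi.single i 1, 0) := by
    have : (xb' t, (1 : ℝ)) = (0, 1) + ∑ i, xb' t i • ((Pi.single i 1 : V3), (0 : ℝ)) := by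
      ext k
      · fin_cases k <;> simp [Fin.sum_univ_three]
      · simp [Fin.sum_univ_three]
    rw [this, map_add, map_sum]
    simp only [ContinuousLinearMap.map_smul]
  ext k
  simp only [emf, Pi.sub_apply, gψ, gψ', tA, tA', lin, curl, sA, sA', cross3]
  fin_cases k <;> simp [Fin.sum_univ_three] <;> ring
end
end
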